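/- Let k ≥ 2 and ℓ ≥ 2 be integers, α a real number, and let S be the vertex set of the (k,ℓ)-spider. With μ_t, χ, ψ_t as in the context, the positive semidefinite matrix Ψ̃ = χχᵀ + Σ_{t=0}^{ℓ−1} ψ_tψ_tᵀ satisfies: ⟨Ψ̃, A^{(0)}⟩ = 2 + (2/k)(α² + α⁴ + ⋯ + α^{2ℓ−2}) + (1/k)α^{2ℓ}; ⟨Ψ̃, A^{(1)}⟩ = 2α; ⟨Ψ̃, A^{(2)}⟩ = −(2/k)(α² + α⁴ + ⋯ + α^{2ℓ−2}); ⟨Ψ̃, A^{(d)}⟩ = 0 for every integer d with 2 < d < 2ℓ; and ⟨Ψ̃, A^{(2ℓ)}⟩ = (1 − 1/k)·α^{2ℓ}. -/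

import Mathlib

/-!
Write `B_d(s,t) = μ_sᵀ A^{(d)} μ_t`. Two uniformly random vertices at depths `s` and `t` lie on the
same arm with probability `1/k`, so their distance is `|s - t|` with probability `1/k` and `s + t`
otherwise; hence, for `s, t ≤ ℓ`,
`B_d(s,t) = α^(s+t) ([|s-t| = d]/k + (1 - 1/k) [s+t = d])` (`spiderB_eq`), which stays correct at the
root, where `|s-t| = s+t`. In `⟨Ψ̃, A^{(d)}⟩` the part of `B_d(t,t)` coming from different arms cancels
against that of `B_d(t-1,t+1)`, since both have depth sum `2t`. Only boundary terms and the same-arm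
terms at `d = 0, 2` survive, which gives one closed formula for every `d` (`spider_total`); the five
claimed values are instances of it.
-/

/-- The vertex set of the `(k,ℓ)`-spider: the root (`none`) together with `k` paths
(arms) of length `ℓ`; `some (a, t)` is the vertex at distance `t+1` from the root
on arm `a`. -/
abbrev Spider (k l : ℕ) := Option (Fin k × Fin l)

/-- The graph distance in the `(k,ℓ)`-spider tree. -/
def spiderDist {k l : ℕ} : Spider k l → Spider k l → ℕ
  | none, none => 0
  | none, some (_, t) => (t : ℕ) + 1
  | some (_, t), none => (t : ℕ) + 1
  | some (a, t), some (b, s) =>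
      if a = b then Nat.dist (t : ℕ) (s : ℕ) else (t : ℕ) + (s : ℕ) + 2

/-- The distance-`d` adjacency matrix `A^{(d)}` of the `(k,ℓ)`-spider. -/
noncomputable def spiderA (k l d : ℕ) : Matrix (Spider k l) (Spider k l) ℝ :=
  Matrix.of fun i j => if spiderDist i j = d then (1 : ℝ) else 0

/-- The Frobenius inner product `⟨B, C⟩ = Tr(Bᵀ C)`. -/
noncomputable def frob {n : Type*} [Fintype n] (B C : Matrix n n ℝ) : ℝ :=
  (B.transpose * C).trace

/-- The vector `μ_t = avg_{i ∈ V_t} {α^t e_i} = (α^t / |V_t|) ∑_{i ∈ V_t} e_i`, where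
`V_t` is the set of spider vertices at distance `t` from the root (`|V_0| = 1`,
`|V_t| = k` for `1 ≤ t ≤ ℓ`).  For `t > ℓ` there are no such vertices, so `μ_t = 0`;
in particular `μ_{ℓ+1} = 0`. -/
noncomputable def spiderMu (k l : ℕ) (α : ℝ) (t : ℕ) : Spider k l → ℝ :=
  fun i => if spiderDist (none : Spider k l) i = t
    then α ^ t / (if t = 0 then 1 else (k : ℝ)) else 0

/-- The bilinear form `(u, v) ↦ uᵀ A^{(d)} v`. -/
noncomputable def spiderForm (k l d : ℕ) (u v : Spider k l → ℝ) : ℝ :=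
  ∑ i, u i * ∑ j, v j * spiderA k l d i j

theorem frob_add {n : Type*} [Fintype n] (B C A : Matrix n n ℝ) :
    frob (B + C) A = frob B A + frob C A := by
  simp [frob, Matrix.add_mul]

theorem frob_sum {n ι : Type*} [Fintype n] (s : Finset ι) (B : ι → Matrix n n ℝ)
    (A : Matrix n n ℝ) : frob (∑ t ∈ s, B t) A = ∑ t ∈ s, frob (B t) A := by
  simp [frob, Matrix.transpose_sum, Matrix.sum_mul, Matrix.trace_sum]

theorem frob_vecMulVec (k l d : ℕ) (u v : Spider k l → ℝ) :
    frob (Matrix.vecMulVec u v) (spiderA k l d) = spiderForm k l d u v := by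
  simp only [frob, spiderForm, Matrix.trace, Matrix.diag, Matrix.mul_apply, Matrix.transpose_apply,
    Matrix.vecMulVec_apply, Finset.mul_sum]
  rw [Finset.sum_comm]
  simp only [mul_assoc]

theorem spiderForm_add_self (k l d : ℕ) (u v : Spider k l → ℝ) :
    spiderForm k l d (u + v) (u + v) = spiderForm k l d u u + spiderForm k l d u v
      + spiderForm k l d v u + spiderForm k l d v v := by
  simp only [spiderForm, Pi.add_apply, add_mul, mul_add, Finset.sum_add_distrib]
  ring

theorem spiderForm_sub_self (k l d : ℕ) (u v : Spider k l → ℝ) :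
    spiderForm k l d (u - v) (u - v) = spiderForm k l d u u - spiderForm k l d u v
      - spiderForm k l d v u + spiderForm k l d v v := by
  simp only [spiderForm, Pi.sub_apply, sub_mul, mul_sub, Finset.sum_sub_distrib]
  ring

theorem sum_spiderMu_zero (k l : ℕ) (α : ℝ) (f : Spider k l → ℝ) :
    ∑ i, spiderMu k l α 0 i * f i = f none := by
  simp [Fintype.sum_option, spiderMu, spiderDist]

theorem sum_spiderMu_succ (k l : ℕ) (α : ℝ) (f : Spider k l → ℝ) (s : ℕ) (hs : s < l) :
    ∑ i, spiderMu k l α (s + 1) i * f i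
      = α ^ (s + 1) / k * ∑ a : Fin k, f (some (a, ⟨s, hs⟩)) := by
  have h : ∀ t : Fin l, ((t : ℕ) = s) ↔ t = ⟨s, hs⟩ := fun t => by simp [Fin.ext_iff]
  simp [Fintype.sum_option, Fintype.sum_prod_type, spiderMu, spiderDist, h, Finset.mul_sum]

theorem spiderMu_of_lt (k l : ℕ) (α : ℝ) (t : ℕ) (ht : l < t) : spiderMu k l α t = 0 := by
  funext i
  rcases i with _ | ⟨a, s⟩
  · have h : 0 ≠ t := by omega
    simp [spiderMu, spiderDist, h]
  · have h : (s : ℕ) + 1 ≠ t := by omega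
    simp [spiderMu, spiderDist, h]

theorem sum_same_arm (k : ℕ) (P Q : ℝ) :
    ∑ a : Fin k, ∑ b : Fin k, (if a = b then P else Q) = k * P + k * (k - 1) * Q := by
  have h : ∀ a b : Fin k, (if a = b then P else Q) = (if a = b then P - Q else 0) + Q := by
    intro a b; split_ifs <;> ring
  simp only [h, Finset.sum_add_distrib, Finset.sum_ite_eq, Finset.mem_univ, if_true,
    Finset.sum_const, Finset.card_univ, Fintype.card_fin, nsmul_eq_mul]
  ring

/-- The value of `μ_sᵀ A^{(d)} μ_t`: the two depths are met on one arm with weight `1/k`, and on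
different arms with weight `1 - 1/k`. -/
theorem spiderB_eq (k l d : ℕ) (hk : 2 ≤ k) (α : ℝ) (s t : ℕ) (hs : s ≤ l) (ht : t ≤ l) :
    spiderForm k l d (spiderMu k l α s) (spiderMu k l α t)
      = α ^ (s + t) * ((if Nat.dist s t = d then 1 else 0) / k
          + (1 - 1 / k) * (if s + t = d then 1 else 0)) := by
  have hk0 : (k : ℝ) ≠ 0 := by positivity
  unfold spiderForm
  rcases s with _ | s <;> rcases t with _ | t
  · simp only [sum_spiderMu_zero]
    simp only [spiderA, spiderDist, Matrix.of_apply, Nat.dist_self]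
    by_cases h : 0 = d
    · subst h; simp
    · simp [h]
  · simp only [sum_spiderMu_zero, sum_spiderMu_succ k l α _ t ht]
    simp only [spiderA, spiderDist, Matrix.of_apply, Nat.dist_zero_left, zero_add]
    by_cases h : t + 1 = d <;> simp [h]
    field_simp
  · simp only [sum_spiderMu_zero, sum_spiderMu_succ k l α _ s hs]
    simp only [spiderA, spiderDist, Matrix.of_apply, Nat.dist_zero_right, add_zero]
    by_cases h : s + 1 = d <;> simp [h]
    field_simp
  · simp only [sum_spiderMu_succ k l α _ s hs, sum_spiderMu_succ k l α _ t ht]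
    have h : ∀ a b : Fin k, spiderA k l d (some (a, ⟨s, hs⟩)) (some (b, ⟨t, ht⟩))
        = if a = b then (if Nat.dist (s + 1) (t + 1) = d then (1 : ℝ) else 0)
          else (if s + 1 + (t + 1) = d then (1 : ℝ) else 0) := by
      intro a b
      have e : s + 1 + (t + 1) = s + t + 2 := by ring
      rw [Nat.dist_succ_succ, e]
      simp only [spiderA, spiderDist, Matrix.of_apply]
      split_ifs <;> rfl
    simp only [h, ← Finset.mul_sum, sum_same_arm]
    field_simp
    ring

/-- One formula for `⟨Ψ̃, A^{(d)}⟩` valid for all `d`. -/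
theorem spider_total (k l d : ℕ) (hk : 2 ≤ k) (hl : 2 ≤ l) (α : ℝ) :
    frob (Matrix.vecMulVec (spiderMu k l α 0 + spiderMu k l α 1)
          (spiderMu k l α 0 + spiderMu k l α 1)
        + ∑ t ∈ Finset.range l, Matrix.vecMulVec (spiderMu k l α t - spiderMu k l α (t + 2))
          (spiderMu k l α t - spiderMu k l α (t + 2))) (spiderA k l d)
      = 2 * (if d = 0 then 1 else 0) + 2 * α * (if d = 1 then 1 else 0)
        + α ^ (2 * l) * ((if d = 0 then 1 else 0) / k + (1 - 1 / k) * (if d = 2 * l then 1 else 0))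
        + 2 / k * ((if d = 0 then 1 else 0) - (if d = 2 then 1 else 0))
          * ∑ t ∈ Finset.Ico 1 l, α ^ (2 * t) := by
  have hk0 : (k : ℝ) ≠ 0 := by positivity
  obtain ⟨n, rfl⟩ : ∃ n, l = n + 2 := ⟨l - 2, by omega⟩
  -- `D` collects the diagonal values `B_d(t,t)`, `O` the off-diagonal values `B_d(t,t+2)`.
  set D : ℕ → ℝ := fun t => α ^ (2 * t) * ((if d = 0 then 1 else 0) / k
    + (1 - 1 / k) * (if d = 2 * t then 1 else 0)) with hD
  set O : ℕ → ℝ := fun t => α ^ (2 * (t + 1)) * ((if d = 2 then 1 else 0) / k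
    + (1 - 1 / k) * (if d = 2 * (t + 1) then 1 else 0)) with hO
  have hdiag : ∀ t, t ≤ n + 2 →
      spiderForm k (n + 2) d (spiderMu k (n + 2) α t) (spiderMu k (n + 2) α t) = D t := by
    intro t ht
    rw [spiderB_eq k _ d hk α t t ht ht]
    simp only [hD, Nat.dist_self, ← two_mul, eq_comm]
  have hoff : ∀ t, t ≤ n →
      spiderForm k (n + 2) d (spiderMu k (n + 2) α t) (spiderMu k (n + 2) α (t + 2)) = O t := by
    intro t ht
    rw [spiderB_eq k _ d hk α t (t + 2) (by omega) (by omega)]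
    have e1 : Nat.dist t (t + 2) = 2 := by simp [Nat.dist]
    have e2 : t + (t + 2) = 2 * (t + 1) := by ring
    simp only [hO, e1, e2, eq_comm]
  have hoff' : ∀ t, t ≤ n →
      spiderForm k (n + 2) d (spiderMu k (n + 2) α (t + 2)) (spiderMu k (n + 2) α t) = O t := by
    intro t ht
    rw [spiderB_eq k _ d hk α (t + 2) t (by omega) (by omega)]
    have e1 : Nat.dist (t + 2) t = 2 := by simp [Nat.dist]
    have e2 : t + 2 + t = 2 * (t + 1) := by ring
    simp only [hO, e1, e2, eq_comm]
  have h01 : spiderForm k (n + 2) d (spiderMu k (n + 2) α 0) (spiderMu k (n + 2) α 1)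
      = α * (if d = 1 then 1 else 0) := by
    rw [spiderB_eq k _ d hk α 0 1 (by omega) (by omega)]
    simp only [Nat.dist_zero_left, zero_add, pow_one, eq_comm]
    split_ifs <;> simp
  have h10 : spiderForm k (n + 2) d (spiderMu k (n + 2) α 1) (spiderMu k (n + 2) α 0)
      = α * (if d = 1 then 1 else 0) := by
    rw [spiderB_eq k _ d hk α 1 0 (by omega) (by omega)]
    simp only [Nat.dist_zero_right, add_zero, pow_one, eq_comm]
    split_ifs <;> simp
  have hD0 : D 0 = if d = 0 then 1 else 0 := by
    simp only [hD]
    split_ifs <;> simp_all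
  -- The last index `t = ℓ - 1` is special because `μ_{ℓ+1} = 0`.
  have hlast : spiderForm k (n + 2) d (spiderMu k (n + 2) α (n + 1) - spiderMu k (n + 2) α (n + 1 + 2))
      (spiderMu k (n + 2) α (n + 1) - spiderMu k (n + 2) α (n + 1 + 2)) = D (n + 1) := by
    rw [spiderMu_of_lt k (n + 2) α (n + 1 + 2) (by omega), sub_zero, hdiag _ (by omega)]
  have hsum : ∑ t ∈ Finset.range (n + 1),
      spiderForm k (n + 2) d (spiderMu k (n + 2) α t - spiderMu k (n + 2) α (t + 2))
        (spiderMu k (n + 2) α t - spiderMu k (n + 2) α (t + 2))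
      = ∑ t ∈ Finset.range (n + 1), (D t - 2 * O t + D (t + 2)) := by
    refine Finset.sum_congr rfl fun t ht => ?_
    have ht' : t ≤ n := by simpa [Nat.lt_succ_iff] using ht
    rw [spiderForm_sub_self, hdiag t (by omega), hdiag (t + 2) (by omega), hoff t ht',
      hoff' t ht']
    ring
  have hI : ∑ t ∈ Finset.Ico 1 (n + 2), α ^ (2 * t)
      = ∑ t ∈ Finset.range (n + 1), α ^ (2 * (t + 1)) := by
    rw [Finset.sum_Ico_eq_sum_range]
    simp [add_comm]
  -- The different-arm parts of `D (t+1)` and `O t` agree, leaving only the same-arm parts.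
  have hcancel : ∑ t ∈ Finset.range (n + 1), D (t + 1) - ∑ t ∈ Finset.range (n + 1), O t
      = ((if d = 0 then 1 else 0) - (if d = 2 then 1 else 0)) / k
          * ∑ t ∈ Finset.range (n + 1), α ^ (2 * (t + 1)) := by
    rw [← Finset.sum_sub_distrib, Finset.mul_sum]
    refine Finset.sum_congr rfl fun t _ => ?_
    simp only [hD, hO]
    ring
  have hs1 : ∑ t ∈ Finset.range (n + 1), D t + D (n + 1)
      = ∑ t ∈ Finset.range (n + 1), D (t + 1) + D 0 := by
    rw [← Finset.sum_range_succ, Finset.sum_range_succ']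
  have hs2 : ∑ t ∈ Finset.range (n + 1), D (t + 2) + D 1
      = ∑ t ∈ Finset.range (n + 1), D (t + 1) + D (n + 2) := by
    rw [← Finset.sum_range_succ (fun t => D (t + 1)) (n + 1),
      Finset.sum_range_succ' (fun t => D (t + 1)) (n + 1)]
  have hDl : D (n + 2) = α ^ (2 * (n + 2)) * ((if d = 0 then 1 else 0) / k
    + (1 - 1 / k) * (if d = 2 * (n + 2) then 1 else 0)) := rfl
  rw [frob_add, frob_sum]
  simp only [frob_vecMulVec]
  rw [Finset.sum_range_succ, hlast, hsum, spiderForm_add_self, hdiag 0 (by omega),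
    hdiag 1 (by omega), h01, h10, hI, ← hDl, ← hD0]
  simp only [Finset.sum_add_distrib, Finset.sum_sub_distrib, ← Finset.mul_sum]
  rw [hD0] at *
  linear_combination hs1 + hs2 + 2 * hcancel

theorem spider_psi_tilde (k l : ℕ) (hk : 2 ≤ k) (hl : 2 ≤ l) (α : ℝ) :
    letI χ : Spider k l → ℝ := spiderMu k l α 0 + spiderMu k l α 1
    letI ψ : ℕ → Spider k l → ℝ := fun t => spiderMu k l α t - spiderMu k l α (t + 2)
    letI Ψ : Matrix (Spider k l) (Spider k l) ℝ :=
      Matrix.vecMulVec χ χ + ∑ t ∈ Finset.range l, Matrix.vecMulVec (ψ t) (ψ t)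
    Ψ.PosSemidef ∧
    frob Ψ (spiderA k l 0)
      = 2 + (2 / (k : ℝ)) * (∑ t ∈ Finset.Ico 1 l, α ^ (2 * t))
          + (1 / (k : ℝ)) * α ^ (2 * l) ∧
    frob Ψ (spiderA k l 1) = 2 * α ∧
    frob Ψ (spiderA k l 2) = -(2 / (k : ℝ)) * (∑ t ∈ Finset.Ico 1 l, α ^ (2 * t)) ∧
    (∀ d : ℕ, 2 < d → d < 2 * l → frob Ψ (spiderA k l d) = 0) ∧
    frob Ψ (spiderA k l (2 * l)) = (1 - 1 / (k : ℝ)) * α ^ (2 * l) := by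
  have hl0 : l ≠ 0 := by omega
  have hl1 : l ≠ 1 := by omega
  refine ⟨?_, ?_, ?_, ?_, ?_, ?_⟩
  · have h : ∀ v : Spider k l → ℝ, (Matrix.vecMulVec v v).PosSemidef := fun v => by
      simpa using Matrix.posSemidef_vecMulVec_self_star v
    exact (h _).add (Matrix.posSemidef_sum _ fun t _ => h _)
  · refine (spider_total k l 0 hk hl α).trans ?_
    simp [hl0, eq_comm]
    ring
  · refine (spider_total k l 1 hk hl α).trans ?_
    have h : ¬ (1 = 2 * l) := by omega
    simp [h]
  · refine (spider_total k l 2 hk hl α).trans ?_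
    have h : ¬ (2 = 2 * l) := by omega
    simp [h]
  · intro d h2 hd
    refine (spider_total k l d hk hl α).trans ?_
    have e0 : d ≠ 0 := by omega
    have e1 : d ≠ 1 := by omega
    have e2 : d ≠ 2 := by omega
    have e3 : d ≠ 2 * l := by omega
    simp [e0, e1, e2, e3]
  · refine (spider_total k l (2 * l) hk hl α).trans ?_
    have e0 : 2 * l ≠ 0 := by omega
    have e1 : 2 * l ≠ 1 := by omega
    have e2 : 2 * l ≠ 2 := by omega
    simp only [e0, e1, e2, if_true, if_false]
    ring
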